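/- There exists C > 0 such that for all nonnegative square-summable sequences f, g, h : ℤ → [0,∞): Σ_{m, k ∈ ℤ} f_m g_{m+k} h_k / ( ⟨m⟩^{1/2} ⟨m+2k⟩^{1/2} ) ≤ C ‖f‖_{ℓ²} ‖g‖_{ℓ²} ‖h‖_{ℓ²}. -/

import Mathlib

open scoped ENNReal NNReal

/-- `⟨x⟩ = (1+x²)^{1/2}`. -/
noncomputable def jbR (x : ℝ) : ℝ := Real.sqrt (1 + x ^ 2)

/-- The `ℓ²(ℤ)` norm (valued in `[0,∞]`). -/
noncomputable def l2Z (ω : ℤ → ℝ≥0) : ℝ≥0∞ :=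
  (∑' n : ℤ, ((ω n : ℝ≥0∞)) ^ 2) ^ (1/2 : ℝ)

/-!
Since `⟨m⟩^{-1/2} ⟨m+2k⟩^{-1/2} ≤ ⟨m⟩⁻¹ + ⟨m+2k⟩⁻¹`, it suffices to bound the sum with the weight
`w (φ (m, k))`, where `w n = ⟨n⟩⁻¹` is square summable and `φ (m, k)` is `m` or `m + 2k`. In each
case the four factors `w`, `f`, `g`, `h` split into two pairs such that the arguments of either
pair determine `(m, k)`; Cauchy–Schwarz over all `(m, k)` then separates the two pairs, and each
pair contributes at most the product of its two `ℓ²` norms.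
-/

open Function

/-- The `ℓ²` norm of a `[0,∞]`-valued family on an arbitrary index type. For `f : ℤ → ℝ≥0` the norm
`l2Z f` is by definition the `l2Norm` of the coercion of `f`. -/
noncomputable def l2Norm {ι : Type*} (u : ι → ℝ≥0∞) : ℝ≥0∞ :=
  (∑' i, u i ^ 2) ^ (1 / 2 : ℝ)

section L2Norm

variable {γ ι κ ι' κ' : Type*}

theorem tsum_mul_le_l2Norm_mul_l2Norm (u v : ι → ℝ≥0∞) :
    ∑' i, u i * v i ≤ l2Norm u * l2Norm v := by
  rw [ENNReal.tsum_eq_iSup_sum]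
  refine iSup_le fun s => ?_
  calc ∑ i ∈ s, u i * v i
      ≤ (∑ i ∈ s, u i ^ 2) ^ (1 / 2 : ℝ) * (∑ i ∈ s, v i ^ 2) ^ (1 / 2 : ℝ) := by
        simpa only [ENNReal.rpow_ofNat] using
          ENNReal.inner_le_Lp_mul_Lq s u v Real.HolderConjugate.two_two
    _ ≤ l2Norm u * l2Norm v := by
        unfold l2Norm
        gcongr <;> exact ENNReal.sum_le_tsum s

theorem l2Norm_comp_le_of_injective {x : γ → ι} (hx : Injective x) (u : ι → ℝ≥0∞) :
    l2Norm (fun c => u (x c)) ≤ l2Norm u :=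
  ENNReal.rpow_le_rpow (ENNReal.tsum_comp_le_tsum_of_injective hx fun i => u i ^ 2) (by norm_num)

theorem l2Norm_mul_prod (u : ι → ℝ≥0∞) (v : κ → ℝ≥0∞) :
    l2Norm (fun p : ι × κ => u p.1 * v p.2) = l2Norm u * l2Norm v := by
  unfold l2Norm
  rw [← ENNReal.mul_rpow_of_nonneg _ _ (by norm_num), ENNReal.tsum_prod']
  simp only [mul_pow, ENNReal.tsum_mul_left, ENNReal.tsum_mul_right]

theorem l2Norm_mul_le_of_injective {x : γ → ι} {y : γ → κ} (hxy : Injective fun c => (x c, y c))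
    (u : ι → ℝ≥0∞) (v : κ → ℝ≥0∞) :
    l2Norm (fun c => u (x c) * v (y c)) ≤ l2Norm u * l2Norm v :=
  (l2Norm_comp_le_of_injective hxy fun p => u p.1 * v p.2).trans_eq (l2Norm_mul_prod u v)

theorem tsum_mul_mul_mul_le_of_injective {x : γ → ι} {y : γ → κ} {x' : γ → ι'} {y' : γ → κ'}
    (hxy : Injective fun c => (x c, y c)) (hxy' : Injective fun c => (x' c, y' c))
    (u : ι → ℝ≥0∞) (v : κ → ℝ≥0∞) (u' : ι' → ℝ≥0∞) (v' : κ' → ℝ≥0∞) :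
    ∑' c, u (x c) * v (y c) * (u' (x' c) * v' (y' c))
      ≤ l2Norm u * l2Norm v * (l2Norm u' * l2Norm v') :=
  (tsum_mul_le_l2Norm_mul_l2Norm _ _).trans <|
    mul_le_mul' (l2Norm_mul_le_of_injective hxy u v) (l2Norm_mul_le_of_injective hxy' u' v')

end L2Norm

section WeightedConvolution

variable {G ι : Type*} [Add G] {φ : G × G → ι}

theorem tsum_weight_mul_convolution_le_of_injective_fst [IsRightCancelAdd G]
    (hφ : Injective fun p => (p.1, φ p)) (w : ι → ℝ≥0∞) (f g h : G → ℝ≥0∞) :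
    ∑' p : G × G, w (φ p) * f p.1 * g (p.1 + p.2) * h p.2
      ≤ l2Norm w * (l2Norm f * l2Norm g * l2Norm h) := by
  have h_inj : Injective fun p : G × G => (p.1 + p.2, p.2) := by
    rintro ⟨m, k⟩ ⟨m', k'⟩ hp
    simp only [Prod.mk.injEq] at hp
    obtain ⟨h_sum, rfl⟩ := hp
    rw [add_right_cancel h_sum]
  calc ∑' p : G × G, w (φ p) * f p.1 * g (p.1 + p.2) * h p.2
      = ∑' p : G × G, f p.1 * w (φ p) * (g (p.1 + p.2) * h p.2) := by
        congr! 2 with p; ring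
    _ ≤ l2Norm f * l2Norm w * (l2Norm g * l2Norm h) :=
        tsum_mul_mul_mul_le_of_injective hφ h_inj f w g h
    _ = l2Norm w * (l2Norm f * l2Norm g * l2Norm h) := by ring

theorem tsum_weight_mul_convolution_le_of_injective_snd [IsLeftCancelAdd G]
    (hφ : Injective fun p => (φ p, p.2)) (w : ι → ℝ≥0∞) (f g h : G → ℝ≥0∞) :
    ∑' p : G × G, w (φ p) * f p.1 * g (p.1 + p.2) * h p.2
      ≤ l2Norm w * (l2Norm f * l2Norm g * l2Norm h) := by
  have h_inj : Injective fun p : G × G => (p.1, p.1 + p.2) := by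
    rintro ⟨m, k⟩ ⟨m', k'⟩ hp
    simp only [Prod.mk.injEq] at hp
    obtain ⟨rfl, h_sum⟩ := hp
    rw [add_left_cancel h_sum]
  calc ∑' p : G × G, w (φ p) * f p.1 * g (p.1 + p.2) * h p.2
      = ∑' p : G × G, w (φ p) * h p.2 * (f p.1 * g (p.1 + p.2)) := by
        congr! 2 with p; ring
    _ ≤ l2Norm w * l2Norm h * (l2Norm f * l2Norm g) :=
        tsum_mul_mul_mul_le_of_injective hφ h_inj w h f g
    _ = l2Norm w * (l2Norm f * l2Norm g * l2Norm h) := by ring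

end WeightedConvolution

theorem jbR_pos (x : ℝ) : 0 < jbR x := Real.sqrt_pos.2 (by positivity)

theorem abs_le_jbR (x : ℝ) : |x| ≤ jbR x := Real.abs_le_sqrt (by linarith)

theorem summable_one_div_jbR_rpow {r : ℝ} (hr : 1 < r) :
    Summable fun n : ℤ => 1 / jbR n ^ r := by
  refine (Real.summable_abs_int_rpow hr).of_norm_bounded_eventually ?_
  filter_upwards [(Set.finite_singleton (0 : ℤ)).compl_mem_cofinite] with n hn
  have h_abs : 0 < |(n : ℝ)| := abs_pos.2 (Int.cast_ne_zero.2 hn)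
  have h_jbR : 0 < jbR n := jbR_pos n
  rw [Real.norm_of_nonneg (by positivity), Real.rpow_neg h_abs.le, ← one_div]
  gcongr
  exact abs_le_jbR n

theorem one_div_rpow_mul_rpow_le {x y s t : ℝ} (hx : 0 < x) (hy : 0 < y) (hs : 0 ≤ s)
    (ht : 0 ≤ t) : 1 / (x ^ s * y ^ t) ≤ 1 / x ^ (s + t) + 1 / y ^ (s + t) := by
  rw [Real.rpow_add hx, Real.rpow_add hy]
  rcases le_total x y with hxy | hyx
  · calc 1 / (x ^ s * y ^ t) ≤ 1 / (x ^ s * x ^ t) := by gcongr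
      _ ≤ _ := le_add_of_nonneg_right (by positivity)
  · calc 1 / (x ^ s * y ^ t) ≤ 1 / (y ^ s * y ^ t) := by gcongr
      _ ≤ _ := le_add_of_nonneg_left (by positivity)

/-- The weight `⟨n⟩^{-r}` on the integers, with values in `[0,∞]`. -/
noncomputable def bracketWeight (r : ℝ) (n : ℤ) : ℝ≥0∞ := ENNReal.ofReal (1 / jbR n ^ r)

theorem l2Norm_bracketWeight_lt_top {r : ℝ} (hr : 1 / 2 < r) : l2Norm (bracketWeight r) < ∞ := by
  have h_sq (n : ℤ) : bracketWeight r n ^ 2 = ENNReal.ofReal (1 / jbR n ^ (r * 2)) := by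
    have h_jbR : 0 < jbR n := jbR_pos n
    rw [bracketWeight, ← ENNReal.ofReal_pow (by positivity), div_pow, one_pow,
      Real.rpow_mul h_jbR.le, Real.rpow_two]
  unfold l2Norm
  simp only [h_sq]
  exact ENNReal.rpow_lt_top_of_nonneg (by norm_num)
    (summable_one_div_jbR_rpow (by linarith)).tsum_ofReal_ne_top

theorem ofReal_one_div_jbR_rpow_mul_le_bracketWeight_add {s t : ℝ} (hs : 0 ≤ s) (ht : 0 ≤ t)
    (m n : ℤ) :
    ENNReal.ofReal (1 / (jbR m ^ s * jbR n ^ t))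
      ≤ bracketWeight (s + t) m + bracketWeight (s + t) n := by
  have hm : 0 < jbR m := jbR_pos m
  have hn : 0 < jbR n := jbR_pos n
  unfold bracketWeight
  rw [← ENNReal.ofReal_add (by positivity) (by positivity)]
  exact ENNReal.ofReal_le_ofReal (one_div_rpow_mul_rpow_le hm hn hs ht)

theorem tsum_bracket_mul_convolution_le {s t : ℝ} (hs : 0 ≤ s) (ht : 0 ≤ t) {φ : ℤ × ℤ → ℤ}
    (hφ : Injective fun p => (p.1, φ p)) (f g h : ℤ → ℝ≥0∞) :
    ∑' p : ℤ × ℤ, ENNReal.ofReal (1 / (jbR p.1 ^ s * jbR (φ p) ^ t)) * f p.1 * g (p.1 + p.2) * h p.2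
      ≤ 2 * l2Norm (bracketWeight (s + t)) * (l2Norm f * l2Norm g * l2Norm h) := by
  set w := bracketWeight (s + t)
  calc ∑' p : ℤ × ℤ,
        ENNReal.ofReal (1 / (jbR p.1 ^ s * jbR (φ p) ^ t)) * f p.1 * g (p.1 + p.2) * h p.2
      ≤ ∑' p : ℤ × ℤ, (w p.1 + w (φ p)) * f p.1 * g (p.1 + p.2) * h p.2 := by
        gcongr with p
        exact ofReal_one_div_jbR_rpow_mul_le_bracketWeight_add hs ht p.1 (φ p)
    _ = ∑' p : ℤ × ℤ, w p.1 * f p.1 * g (p.1 + p.2) * h p.2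
          + ∑' p : ℤ × ℤ, w (φ p) * f p.1 * g (p.1 + p.2) * h p.2 := by
        simp only [add_mul, ENNReal.tsum_add]
    _ ≤ l2Norm w * (l2Norm f * l2Norm g * l2Norm h)
          + l2Norm w * (l2Norm f * l2Norm g * l2Norm h) :=
        add_le_add (tsum_weight_mul_convolution_le_of_injective_snd injective_id w f g h)
          (tsum_weight_mul_convolution_le_of_injective_fst hφ w f g h)
    _ = 2 * l2Norm w * (l2Norm f * l2Norm g * l2Norm h) := by ring

theorem injective_prodMk_fst_add_mul {R : Type*} [NonUnitalNonAssocRing R] [NoZeroDivisors R]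
    {c : R} (hc : c ≠ 0) : Injective fun p : R × R => (p.1, p.1 + c * p.2) := by
  rintro ⟨m, k⟩ ⟨m', k'⟩ hp
  simp only [Prod.mk.injEq] at hp
  obtain ⟨rfl, h_sum⟩ := hp
  rw [mul_left_cancel₀ hc (add_left_cancel h_sum)]

theorem bilinear_weighted_convolution_bound_general {s t : ℝ} (hs : 0 ≤ s) (ht : 0 ≤ t)
    (hst : 1 / 2 < s + t) :
    ∃ C : ℝ, 0 < C ∧
      ∀ φ : ℤ × ℤ → ℤ, Injective (fun p => (p.1, φ p)) → ∀ f g h : ℤ → ℝ≥0,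
        (∑' p : ℤ × ℤ,
            ENNReal.ofReal (1 / (jbR (p.1 : ℝ) ^ s * jbR (φ p : ℝ) ^ t)) *
              (f p.1 : ℝ≥0∞) * (g (p.1 + p.2) : ℝ≥0∞) * (h p.2 : ℝ≥0∞))
          ≤ ENNReal.ofReal C * (l2Z f * l2Z g * l2Z h) := by
  have h_fin : 2 * l2Norm (bracketWeight (s + t)) < ∞ :=
    ENNReal.mul_lt_top ENNReal.ofNat_lt_top (l2Norm_bracketWeight_lt_top hst)
  obtain ⟨C, -, hC, -⟩ := ENNReal.lt_iff_exists_real_btwn.1 h_fin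
  refine ⟨C, ENNReal.ofReal_pos.1 (pos_of_gt hC), fun φ hφ f g h => ?_⟩
  exact (tsum_bracket_mul_convolution_le hs ht hφ _ _ _).trans (mul_le_mul_left hC.le _)

/-- `Σ_{m,k} f_m g_{m+k} h_k / (⟨m⟩^{1/2} ⟨m+2k⟩^{1/2})
≤ C ‖f‖_{ℓ²} ‖g‖_{ℓ²} ‖h‖_{ℓ²}`. -/
theorem bilinear_weighted_convolution_bound :
    ∃ C : ℝ, 0 < C ∧
      ∀ f g h : ℤ → ℝ≥0,
        Summable (fun n => f n ^ 2) → Summable (fun n => g n ^ 2) →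
        Summable (fun n => h n ^ 2) →
        (∑' p : ℤ × ℤ,
            ENNReal.ofReal (1 /
                (jbR (p.1 : ℝ) ^ (1/2 : ℝ) * jbR ((p.1 + 2 * p.2 : ℤ) : ℝ) ^ (1/2 : ℝ))) *
              (f p.1 : ℝ≥0∞) * (g (p.1 + p.2) : ℝ≥0∞) * (h p.2 : ℝ≥0∞))
          ≤ ENNReal.ofReal C * (l2Z f * l2Z g * l2Z h) := by
  obtain ⟨C, hC, h_bound⟩ := bilinear_weighted_convolution_bound_general
    (s := 1 / 2) (t := 1 / 2) (by norm_num) (by norm_num) (by norm_num)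
  exact ⟨C, hC, fun f g h _ _ _ => h_bound _ (injective_prodMk_fst_add_mul two_ne_zero) f g h⟩
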